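/- Let S¹ denote the unit circle (e.g. the unit circle in ℂ), let T² = S¹ × S¹ be the torus, and let f : T² → S¹ be the projection onto the first coordinate, f(x, y) = x. Then for every continuous map g : T² → S¹ that is nullhomotopic (homotopic to a constant map), there exists a point (x, y) ∈ T² with f(x, y) = g(x, y), i.e. g(x, y) = x. -/

import Mathlib

/-!
If two maps `f, g : X → S¹` never agree, then `g / f` avoids `1`, so it has a continuous logarithm
`θ : X → ℝ`, and `t ↦ exp (t θ) f` is a homotopy from `f` to `g`. Hence a map that is not
nullhomotopic agrees somewhere with each nullhomotopic map. The projection of the torus onto the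
circle is not nullhomotopic: it has a section, so otherwise the circle would be contractible,
whereas the covering `ℝ → S¹` has nontrivial deck group.
-/

section Contractibility

variable {X Y : Type*} [TopologicalSpace X] [TopologicalSpace Y]

theorem contractibleSpace_of_nullhomotopic_of_comp_eq_id {f : C(X, Y)} {s : C(Y, X)}
    (hf : f.Nullhomotopic) (hs : f.comp s = .id Y) : ContractibleSpace Y :=
  (contractible_iff_id_nullhomotopic Y).mpr (hs ▸ hf.comp_left s)

theorem contractibleSpace_of_nullhomotopic_fst [Nonempty Y]
    (h : (ContinuousMap.fst : C(X × Y, X)).Nullhomotopic) : ContractibleSpace X := by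
  obtain ⟨y⟩ := ‹Nonempty Y›
  let slice : C(X, X × Y) := (ContinuousMap.id X).prodMk (.const X y)
  exact contractibleSpace_of_nullhomotopic_of_comp_eq_id (s := slice) h rfl

theorem not_simplyConnectedSpace_of_isAddQuotientCoveringMap {G : Type*} [AddGroup G]
    [AddAction G X] [Nontrivial G] [SimplyConnectedSpace X] {p : X → Y}
    (hp : IsAddQuotientCoveringMap p G) : ¬ SimplyConnectedSpace Y := by
  intro _
  obtain ⟨e⟩ : Nonempty X := inferInstance
  have : Nontrivial (FundamentalGroup Y (p e)) :=
    (hp.fundamentalGroupEquiv ⟨e, rfl⟩).toEquiv.nontrivial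
  exact not_subsingleton (FundamentalGroup Y (p e)) inferInstance

theorem not_contractibleSpace_circle : ¬ ContractibleSpace Circle := by
  intro _
  have : Nontrivial (AddSubgroup.zmultiples (2 * Real.pi)) :=
    (AddSubgroup.nontrivial_iff_ne_bot _).mpr <|
      AddSubgroup.zmultiples_ne_bot.mpr Real.two_pi_pos.ne'
  exact not_simplyConnectedSpace_of_isAddQuotientCoveringMap
    Circle.isAddQuotientCoveringMap_exp inferInstance

end Contractibility

section CircleValuedMaps

variable {X : Type*} [TopologicalSpace X]

theorem circle_exp_pi : Circle.exp Real.pi = -1 :=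
  Circle.ext <| by simp

theorem continuousAt_arg_circle {z : Circle} (hz : z ≠ -1) :
    ContinuousAt (fun w : Circle ↦ Complex.arg w) z := by
  have arg_ne_pi : Complex.arg z ≠ Real.pi := fun h ↦
    hz <| by rw [← Circle.exp_arg z, h, circle_exp_pi]
  have mem_slitPlane : (z : ℂ) ∈ Complex.slitPlane :=
    Complex.mem_slitPlane_iff_arg.mpr ⟨arg_ne_pi, z.coe_ne_zero⟩
  exact (Complex.continuousAt_arg mem_slitPlane).comp continuous_subtype_val.continuousAt

theorem exists_circle_exp_comp_eq_of_forall_ne_neg_one {h : C(X, Circle)} (hh : ∀ x, h x ≠ -1) :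
    ∃ θ : C(X, ℝ), Circle.exp.comp θ = h :=
  ⟨⟨fun x ↦ Complex.arg (h x), continuous_iff_continuousAt.mpr fun x ↦
    (continuousAt_arg_circle (hh x)).comp h.continuous.continuousAt⟩,
    ContinuousMap.ext fun x ↦ Circle.exp_arg (h x)⟩

theorem homotopic_circle_exp_comp_mul (θ : C(X, ℝ)) (f : C(X, Circle)) :
    f.Homotopic (Circle.exp.comp θ * f) :=
  ⟨{ toFun := fun p ↦ Circle.exp (p.1 * θ p.2) * f p.2
     continuous_toFun := by fun_prop
     map_zero_left := by simp
     map_one_left := by simp }⟩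

theorem homotopic_circle_of_forall_ne {f g : C(X, Circle)} (hfg : ∀ x, g x ≠ f x) :
    f.Homotopic g := by
  obtain ⟨θ, hθ⟩ : ∃ θ : C(X, ℝ), Circle.exp.comp θ = -(g / f) :=
    exists_circle_exp_comp_eq_of_forall_ne_neg_one fun x hx ↦
      hfg x <| div_eq_one.mp <| neg_injective hx
  have exp_mul_eq : Circle.exp.comp (θ + .const X Real.pi) * f = g := by
    ext1 x
    have exp_θ : Circle.exp (θ x) = -(g x / f x) := DFunLike.congr_fun hθ x
    simp [Circle.exp_add, exp_θ, circle_exp_pi]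
  exact exp_mul_eq ▸ homotopic_circle_exp_comp_mul _ f

theorem stmt7_general {f g : C(X, Circle)} (hf : ¬ f.Nullhomotopic) (hg : g.Nullhomotopic) :
    ∃ x, g x = f x := by
  by_contra! hne
  obtain ⟨c, hgc⟩ := hg
  exact hf ⟨c, (homotopic_circle_of_forall_ne hne).trans hgc⟩

end CircleValuedMaps

/-- Section 5 of the paper: the projection of the torus onto
the circle is weakly coincidence-producing.  Let `f : T² = S¹ × S¹ → S¹` be
the first-coordinate projection.  Every nullhomotopic continuous map
`g : T² → S¹` has a coincidence with `f`: there is `p = (x, y)` with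
`g p = p.1 = x`. -/
theorem stmt7 (g : C(Circle × Circle, Circle)) (hg : g.Nullhomotopic) :
    ∃ p : Circle × Circle, g p = p.1 :=
  stmt7_general (fun hfst ↦ not_contractibleSpace_circle <|
    contractibleSpace_of_nullhomotopic_fst hfst) hg
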